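/- Let A be a Nakayama algebra and M an indecomposable module. Then pd M is finite and odd if and only if every composition factor of M has finite odd projective dimension; and in that case pd M equals the maximum of pd S over the composition factors S of M. -/

import Mathlib

open CategoryTheory CategoryTheory.Limits

noncomputable section

namespace ArtinAlg

variable (A : Type) [Ring A]

/-- `M` admits a projective resolution of length at most `n`. -/
inductive ProjDimLE : ℕ → ModuleCat.{0} A → Prop
  | zero (M : ModuleCat.{0} A) (h : Projective M) : ProjDimLE 0 M
  | succ (n : ℕ) (M P : ModuleCat.{0} A) (f : P ⟶ M) (hP : Projective P) (hf : Epi f)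
      (h : ProjDimLE n (kernel f)) : ProjDimLE (n + 1) M

/-- `M` admits an injective coresolution of length at most `n`. -/
inductive InjDimLE : ℕ → ModuleCat.{0} A → Prop
  | zero (M : ModuleCat.{0} A) (h : Injective M) : InjDimLE 0 M
  | succ (n : ℕ) (M I : ModuleCat.{0} A) (f : M ⟶ I) (hI : Injective I) (hf : Mono f)
      (h : InjDimLE n (cokernel f)) : InjDimLE (n + 1) M

/-- The projective dimension `pd M ∈ ℕ∞`. -/
def projDim (M : ModuleCat.{0} A) : ℕ∞ :=
  sInf {d : ℕ∞ | ∃ n : ℕ, d = n ∧ ProjDimLE A n M}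

/-- The injective dimension `id M ∈ ℕ∞`. -/
def injDim (M : ModuleCat.{0} A) : ℕ∞ :=
  sInf {d : ℕ∞ | ∃ n : ℕ, d = n ∧ InjDimLE A n M}

/-- `f : P ⟶ M` is a projective cover: `P` is projective and `f` is an essential
(superfluous) epimorphism. -/
def IsProjectiveCoverHom {P M : ModuleCat.{0} A} (f : P ⟶ M) : Prop :=
  Projective P ∧ Epi f ∧ ∀ (N : ModuleCat.{0} A) (g : N ⟶ P), Epi (g ≫ f) → Epi g

/-- `P` is a projective cover of `M`. -/
def IsProjCoverOf (M P : ModuleCat.{0} A) : Prop :=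
  ∃ f : P ⟶ M, IsProjectiveCoverHom A f

/-- `f : M ⟶ I` is an injective envelope: `I` is injective and `f` is an essential
monomorphism. -/
def IsInjectiveEnvelopeHom {M I : ModuleCat.{0} A} (f : M ⟶ I) : Prop :=
  Injective I ∧ Mono f ∧ ∀ (N : ModuleCat.{0} A) (g : I ⟶ N), Mono (f ≫ g) → Mono g

/-- `I` is an injective envelope of `M`. -/
def IsInjEnvOf (M I : ModuleCat.{0} A) : Prop :=
  ∃ f : M ⟶ I, IsInjectiveEnvelopeHom A f

/-- `X ≅ Ω M`, the kernel of a projective cover of `M`. -/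
def IsSyzygyOf (M X : ModuleCat.{0} A) : Prop :=
  ∃ (P : ModuleCat.{0} A) (f : P ⟶ M), IsProjectiveCoverHom A f ∧ Nonempty (X ≅ kernel f)

/-- `X ≅ Σ M`, the cokernel of an injective envelope of `M`. -/
def IsCosyzygyOf (M X : ModuleCat.{0} A) : Prop :=
  ∃ (I : ModuleCat.{0} A) (f : M ⟶ I), IsInjectiveEnvelopeHom A f ∧ Nonempty (X ≅ cokernel f)

/-- `X ≅ Ω^n M`. -/
def IsNthSyzygy : ℕ → ModuleCat.{0} A → ModuleCat.{0} A → Prop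
  | 0, M, X => Nonempty (X ≅ M)
  | n + 1, M, X => ∃ Y, IsSyzygyOf A M Y ∧ IsNthSyzygy n Y X

/-- `X ≅ Σ^n M`. -/
def IsNthCosyzygy : ℕ → ModuleCat.{0} A → ModuleCat.{0} A → Prop
  | 0, M, X => Nonempty (X ≅ M)
  | n + 1, M, X => ∃ Y, IsCosyzygyOf A M Y ∧ IsNthCosyzygy n Y X

/-- `X` is a direct summand of `Y`. -/
def IsDirectSummandOf (X Y : ModuleCat.{0} A) : Prop :=
  ∃ (i : X ⟶ Y) (r : Y ⟶ X), i ≫ r = 𝟙 X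

/-- `X ∈ add W` : `X` is a direct summand of a finite direct sum of copies of `W`. -/
def InAdd (X W : ModuleCat.{0} A) : Prop :=
  ∃ n : ℕ, IsDirectSummandOf A X (ModuleCat.of A (Fin n → ↥W))

/-- The delooping level of `M` is at most `d` :
`Ω^d M ∈ add (A ⊕ Ω^{d+1} M')` for some finitely generated `M'`. -/
def DelLE (d : ℕ) (M : ModuleCat.{0} A) : Prop :=
  ∃ X, IsNthSyzygy A d M X ∧
    ∃ M' : ModuleCat.{0} A, Module.Finite A ↥M' ∧
      ∃ X', IsNthSyzygy A (d + 1) M' X' ∧ InAdd A X (ModuleCat.of A (A × ↥X'))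

/-- The delooping level `del M ∈ ℕ∞`. -/
def delLevel (M : ModuleCat.{0} A) : ℕ∞ :=
  sInf {d : ℕ∞ | ∃ n : ℕ, d = n ∧ DelLE A n M}

/-- The delooping level of the algebra: the supremum of `del S` over the simple modules. -/
def delAlg : ℕ∞ :=
  sSup {d : ℕ∞ | ∃ S : ModuleCat.{0} A, IsSimpleModule A ↥S ∧ delLevel A S = d}

/-- `Q` is a minimal injective cogenerator: the injective envelope of the direct sum of
a complete set of representatives of the simple modules. -/
def IsMinimalInjectiveCogenerator (Q : ModuleCat.{0} A) : Prop :=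
  ∃ (ι : Type) (_ : Fintype ι) (S : ι → ModuleCat.{0} A),
    (∀ i, IsSimpleModule A ↥(S i)) ∧
    (∀ T : ModuleCat.{0} A, IsSimpleModule A ↥T → ∃! i, Nonempty (↥T ≃ₗ[A] ↥(S i))) ∧
    IsInjEnvOf A (ModuleCat.of A (∀ i, ↥(S i))) Q

/-- The desuspending level of `M` is at most `d` :
`Σ^d M ∈ add (D(A) ⊕ Σ^{d+1} M')` for some finitely generated `M'`. -/
def DesLE (d : ℕ) (M : ModuleCat.{0} A) : Prop :=
  ∃ X, IsNthCosyzygy A d M X ∧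
    ∃ Q, IsMinimalInjectiveCogenerator A Q ∧
      ∃ M' : ModuleCat.{0} A, Module.Finite A ↥M' ∧
        ∃ X', IsNthCosyzygy A (d + 1) M' X' ∧ InAdd A X (ModuleCat.of A (↥Q × ↥X'))

/-- The desuspending level `des M ∈ ℕ∞`. -/
def desLevel (M : ModuleCat.{0} A) : ℕ∞ :=
  sInf {d : ℕ∞ | ∃ n : ℕ, d = n ∧ DesLE A n M}

/-- The desuspending level of the algebra. -/
def desAlg : ℕ∞ :=
  sSup {d : ℕ∞ | ∃ S : ModuleCat.{0} A, IsSimpleModule A ↥S ∧ desLevel A S = d}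

/-- The (small) finitistic projective dimension `fin-pro A`. -/
def finProDim : ℕ∞ :=
  sSup {d : ℕ∞ | ∃ M : ModuleCat.{0} A, Module.Finite A ↥M ∧ projDim A M = d ∧ d ≠ ⊤}

/-- The (small) finitistic injective dimension `fin-inj A`. -/
def finInjDim : ℕ∞ :=
  sSup {d : ℕ∞ | ∃ M : ModuleCat.{0} A, Module.Finite A ↥M ∧ injDim A M = d ∧ d ≠ ⊤}

/-- The big finitistic projective dimension `Fin-pro A`. -/
def bigFinProDim : ℕ∞ :=
  sSup {d : ℕ∞ | ∃ M : ModuleCat.{0} A, projDim A M = d ∧ d ≠ ⊤}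

/-- The big finitistic injective dimension `Fin-inj A`. -/
def bigFinInjDim : ℕ∞ :=
  sSup {d : ℕ∞ | ∃ M : ModuleCat.{0} A, injDim A M = d ∧ d ≠ ⊤}

/-- `M` is an indecomposable nonzero module. -/
def Indec (M : ModuleCat.{0} A) : Prop :=
  Nontrivial ↥M ∧ ∀ (N₁ N₂ : Submodule A ↥M), IsCompl N₁ N₂ → N₁ = ⊥ ∨ N₂ = ⊥

/-- `M` is serial (uniserial): its submodules form a chain. -/
def IsUniserial (M : ModuleCat.{0} A) : Prop :=
  ∀ N₁ N₂ : Submodule A ↥M, N₁ ≤ N₂ ∨ N₂ ≤ N₁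

/-- `A` is a Nakayama algebra: all finitely generated indecomposable modules are serial. -/
def IsNakayama : Prop :=
  ∀ M : ModuleCat.{0} A, Module.Finite A ↥M → Indec A M → IsUniserial A M

/-- `A` is connected: it is not a nontrivial product of algebras. -/
def IsConnectedAlgebra : Prop :=
  Nontrivial A ∧ ∀ e : A, IsIdempotentElem e → e ∈ Set.center A → e = 0 ∨ e = 1

/-- `A` is a cyclic Nakayama algebra: connected Nakayama with no simple projective module. -/
def IsCyclicNakayama : Prop :=
  IsNakayama A ∧ IsConnectedAlgebra A ∧
    ¬ ∃ S : ModuleCat.{0} A, IsSimpleModule A ↥S ∧ Projective S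

/-- `T ≅ top M` (and `top M` is simple): there is an essential epimorphism `M ⟶ T`. -/
def IsSimpleTopOf (M T : ModuleCat.{0} A) : Prop :=
  IsSimpleModule A ↥T ∧
    ∃ f : M ⟶ T, Epi f ∧ ∀ (N : ModuleCat.{0} A) (g : N ⟶ M), Epi (g ≫ f) → Epi g

/-- `S ≅ soc M` (and `soc M` is simple): there is an essential monomorphism `S ⟶ M`. -/
def IsSimpleSocOf (M S : ModuleCat.{0} A) : Prop :=
  IsSimpleModule A ↥S ∧
    ∃ f : S ⟶ M, Mono f ∧ ∀ (N : ModuleCat.{0} A) (g : M ⟶ N), Mono (f ≫ g) → Mono g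

/-- `0 ⟶ N ⟶ E ⟶ M ⟶ 0` is an almost split (Auslander-Reiten) sequence. -/
def IsAlmostSplitSeq {N E M : ModuleCat.{0} A} (f : N ⟶ E) (g : E ⟶ M) : Prop :=
  Mono f ∧ Epi g ∧ (∃ w : f ≫ g = 0, (ShortComplex.mk f g w).Exact) ∧
  (¬ ∃ s : M ⟶ E, s ≫ g = 𝟙 M) ∧ Indec A N ∧ Indec A M ∧
  ∀ (X : ModuleCat.{0} A) (h : X ⟶ M), (¬ ∃ s : M ⟶ X, s ≫ h = 𝟙 M) → ∃ h' : X ⟶ E, h' ≫ g = h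

/-- `N ≅ τ M`, the Auslander-Reiten translate of `M` : there is an almost split sequence
`0 ⟶ N ⟶ E ⟶ M ⟶ 0`. -/
def IsTauOf (N M : ModuleCat.{0} A) : Prop :=
  ∃ (E : ModuleCat.{0} A) (f : N ⟶ E) (g : E ⟶ M), IsAlmostSplitSeq A f g

/-- `U ≅ ψ S = τ⁻ top (I S)`. -/
def IsPsiOf (S U : ModuleCat.{0} A) : Prop :=
  ∃ I, IsInjEnvOf A S I ∧ ∃ T, IsSimpleTopOf A I T ∧ IsTauOf A T U

/-- `T ≅ γ S = τ soc (P S)`. -/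
def IsGammaOf (S T : ModuleCat.{0} A) : Prop :=
  ∃ P, IsProjCoverOf A S P ∧ ∃ U, IsSimpleSocOf A P U ∧ IsTauOf A T U

/-- `T ≅ φ S = top (I S)`. -/
def IsPhiOf (S T : ModuleCat.{0} A) : Prop :=
  ∃ I, IsInjEnvOf A S I ∧ IsSimpleTopOf A I T

/-- There is a `ψ`-path `(S_1, …, S_m)` of cardinality `m` ending in `S`. -/
def PsiPathTo (m : ℕ) (S : ModuleCat.{0} A) : Prop :=
  1 ≤ m ∧ ∃ c : ℕ → ModuleCat.{0} A,
    (∀ i < m, IsSimpleModule A ↥(c i)) ∧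
    (∀ i, i + 1 < m → IsPsiOf A (c i) (c (i + 1))) ∧
    Nonempty (c (m - 1) ≅ S)

/-- `a(S)`: the supremum of the cardinalities of `ψ`-paths ending in `S`. -/
def aVal (S : ModuleCat.{0} A) : ℕ∞ :=
  sSup {d : ℕ∞ | ∃ m : ℕ, d = m ∧ PsiPathTo A m S}

/-- `a(A)`: the maximum of `a(S)` over the simple modules which are not `ψ`-cyclic. -/
def aAlg : ℕ∞ :=
  sSup {d : ℕ∞ | ∃ S : ModuleCat.{0} A, IsSimpleModule A ↥S ∧ aVal A S ≠ ⊤ ∧ aVal A S = d}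

/-- `S` is a composition factor of `M`: a simple subquotient of `M`. -/
def IsCompFactorOf (S M : ModuleCat.{0} A) : Prop :=
  IsSimpleModule A ↥S ∧ ∃ N' N : Submodule A ↥M, N' ≤ N ∧
    Nonempty ((↥N ⧸ N'.comap N.subtype) ≃ₗ[A] ↥S)

/-- `e(S) = min {pd S, pd (I S)} = x`. -/
def ERelVal (S : ModuleCat.{0} A) (x : ℕ∞) : Prop :=
  ∃ I, IsInjEnvOf A S I ∧ x = min (projDim A S) (projDim A I)

/-- `e*(S) = min {id S, id (P S)} = x`. -/
def EStarVal (S : ModuleCat.{0} A) (x : ℕ∞) : Prop :=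
  ∃ P, IsProjCoverOf A S P ∧ x = min (injDim A S) (injDim A P)

/-- `T = h(S) = top (Ω^{e(S)} N S)`, the homological permutation. -/
def HRel (S T : ModuleCat.{0} A) : Prop :=
  IsSimpleModule A ↥S ∧ IsSimpleModule A ↥T ∧
  ∃ z : ℕ, ERelVal A S z ∧
    ∃ N, ((Odd z ∧ N = S) ∨ (Even z ∧ IsInjEnvOf A S N)) ∧
      ∃ X, IsNthSyzygy A z N X ∧ IsSimpleTopOf A X T

/-- `S = h*(T) = soc (Σ^{e*(T)} N* T)`, the inverse homological permutation. -/
def HStarRel (T S : ModuleCat.{0} A) : Prop :=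
  IsSimpleModule A ↥T ∧ IsSimpleModule A ↥S ∧
  ∃ z : ℕ, EStarVal A T z ∧
    ∃ N, ((Odd z ∧ N = T) ∨ (Even z ∧ IsProjCoverOf A T N)) ∧
      ∃ X, IsNthCosyzygy A z N X ∧ IsSimpleSocOf A X S

/-- The `t`-fold relational iterate of a relation on modules (up to isomorphism). -/
def IterRel (r : ModuleCat.{0} A → ModuleCat.{0} A → Prop) :
    ℕ → ModuleCat.{0} A → ModuleCat.{0} A → Prop
  | 0, X, Y => Nonempty (X ≅ Y)
  | n + 1, X, Y => ∃ Z, r X Z ∧ IterRel r n Z Y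

end ArtinAlg

/-!
Shift the projective dimension by one, so that it is `0` for the zero module; odd dimensions become
even numbers.

If the ends of a short exact sequence have even shifted dimensions `m` and `n`, then `n ≠ m + 1`, so
no cancellation occurs in the long exact `Ext` sequence and the middle term has shifted dimension
`max m n`. Climbing a composition series, a module all of whose composition factors have odd
dimension has the dimension of one of them.

Conversely, let `0 → X → Y → Z → 0` be exact with `Y` uniserial. The projective cover `P → Y` has
uniserial source, so the composite `P → Z` is again a projective cover, and the kernels form an
exact sequence `0 → ΩY → ΩZ → X → 0` whose middle term, a submodule of `P`, is uniserial. Three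
such rotations give `0 → Ω²X → Ω²Y → Ω²Z → 0` with uniserial middle term, and induction on the
dimension shows that if `pd Y` is odd, then `X` and `Z` are zero or of odd dimension at most `pd Y`.
Every composition factor is a quotient of a submodule.
-/

namespace ArtinAlg

section Abelian

variable {C : Type*} [Category C] [Abelian C] {S : ShortComplex C} {X Y : C} {m n : ℕ}

/-- `X` has projective dimension exactly `n - 1`, where the zero object has dimension `-1`:
the projective dimension, shifted so that it takes values in `ℕ`. -/
def HasProjLength (X : C) (n : ℕ) : Prop :=
  ∀ m : ℕ, HasProjectiveDimensionLT X m ↔ n ≤ m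

namespace HasProjLength

lemma of_iso (h : HasProjLength X n) (e : X ≅ Y) : HasProjLength Y n := fun m =>
  ⟨fun _ => (h m).1 (hasProjectiveDimensionLT_of_iso e.symm m), fun hm =>
    have := (h m).2 hm
    hasProjectiveDimensionLT_of_iso e m⟩

lemma zero_iff : HasProjLength X 0 ↔ IsZero X := by
  rw [← hasProjectiveDimensionLT_zero_iff_isZero]
  refine ⟨fun h => (h 0).2 le_rfl, fun _ m => iff_of_true ?_ m.zero_le⟩
  exact hasProjectiveDimensionLT_of_ge X 0 m m.zero_le

lemma succ_iff (h : ¬ IsZero X) :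
    HasProjLength X (n + 1) ↔ ∀ m, HasProjectiveDimensionLT X (m + 1) ↔ n ≤ m := by
  refine ⟨fun hn m => (hn (m + 1)).trans Nat.succ_le_succ_iff, fun hn m => ?_⟩
  cases m with
  | zero => simpa [hasProjectiveDimensionLT_zero_iff_isZero] using h
  | succ m => exact (hn m).trans Nat.succ_le_succ_iff.symm

lemma max_of_shortExact (hS : S.ShortExact) (h₁ : HasProjLength S.X₁ m)
    (h₃ : HasProjLength S.X₃ n) (hmn : n ≠ m + 1) : HasProjLength S.X₂ (max m n) := by
  refine fun k => ⟨fun h₂ => ?_, fun hk => ?_⟩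
  · have hn : n ≤ max (m + 1) k := by
      obtain ⟨j, hj⟩ : ∃ j, max (m + 1) k = j + 1 := ⟨max m (k - 1), by omega⟩
      rw [hj]
      exact (h₃ _).1 <| hS.hasProjectiveDimensionLT_X₃ j ((h₁ j).2 (by omega))
        (hasProjectiveDimensionLT_of_ge _ k _ (by omega))
    have hm : m ≤ max k (n - 1) := (h₁ _).1 <| hS.hasProjectiveDimensionLT_X₁ _
      (hasProjectiveDimensionLT_of_ge _ k _ (by omega)) ((h₃ _).2 (by omega))
    omega
  · exact hS.hasProjectiveDimensionLT_X₂ k ((h₁ k).2 (by omega)) ((h₃ k).2 (by omega))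

end HasProjLength

lemma isZero_X₁_and_isZero_X₃ (hS : S.ShortExact) (h : IsZero S.X₂) :
    IsZero S.X₁ ∧ IsZero S.X₃ :=
  have := hS.mono_f
  have := hS.epi_g
  ⟨h.of_mono S.f, h.of_epi S.g⟩

lemma exists_shortExact_kernel_comp (hS : S.ShortExact) {P : C} (p : P ⟶ S.X₂) [Epi p] :
    ∃ (i : kernel p ⟶ kernel (p ≫ S.g)) (q : kernel (p ≫ S.g) ⟶ S.X₁) (w : i ≫ q = 0),
      (ShortComplex.mk i q w).ShortExact := by
  have := hS.mono_f
  let i : kernel p ⟶ kernel (p ≫ S.g) := kernel.lift _ (kernel.ι p) (by simp)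
  let q : kernel (p ≫ S.g) ⟶ S.X₁ := hS.exact.lift (kernel.ι _ ≫ p) (by simp)
  have hi : i ≫ kernel.ι (p ≫ S.g) = kernel.ι p := kernel.lift_ι ..
  have hq : q ≫ S.f = kernel.ι (p ≫ S.g) ≫ p := hS.exact.lift_f ..
  have w : i ≫ q = 0 := by
    rw [← cancel_mono S.f, Category.assoc, hq, reassoc_of% hi, kernel.condition, zero_comp]
  have : Mono i := mono_of_mono_fac hi
  have : Epi q := by
    rw [epi_iff_surjective_up_to_refinements]
    intro T a
    obtain ⟨T', π, hπ, x, hx⟩ := surjective_up_to_refinements_of_epi p (a ≫ S.f)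
    refine ⟨T', π, hπ, kernel.lift _ x (by simp [← reassoc_of% hx]), ?_⟩
    simp [← cancel_mono S.f, hq, hx]
  refine ⟨i, q, w, .mk (ShortComplex.exact_of_f_is_kernel _ ?_)⟩
  refine KernelFork.IsLimit.ofι' i w fun k hk => ⟨kernel.lift p (k ≫ kernel.ι _) ?_, ?_⟩
  · simpa [hq] using hk =≫ S.f
  · simp [← cancel_mono (kernel.ι (p ≫ S.g)), hi]

end Abelian

section ProjDim

lemma sInf_natCast_eq_iff {p : ℕ → Prop} (hp : Monotone p) {n : ℕ} :
    sInf {d : ℕ∞ | ∃ m : ℕ, d = m ∧ p m} = n ↔ ∀ m, p m ↔ n ≤ m := by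
  have le_iff (k : ℕ) : sInf {d : ℕ∞ | ∃ m : ℕ, d = m ∧ p m} ≤ k ↔ p k := by
    refine ⟨fun h => ?_, fun h => sInf_le ⟨k, rfl, h⟩⟩
    obtain ⟨_, ⟨m, rfl, hm⟩, hmk⟩ := sInf_lt_iff.1 (h.trans_lt (Nat.cast_lt.2 k.lt_succ_self))
    exact hp (Nat.lt_succ_iff.1 (Nat.cast_lt.1 hmk)) hm
  refine ⟨fun h m => by rw [← le_iff, h, Nat.cast_le], fun h => ?_⟩
  refine le_antisymm ((le_iff n).2 ((h n).2 le_rfl)) (le_sInf ?_)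
  rintro _ ⟨m, rfl, hm⟩
  exact Nat.cast_le.2 ((h m).1 hm)

variable {A : Type} [Ring A] {M : ModuleCat.{0} A} {m n : ℕ}

lemma not_isZero_iff_nontrivial : ¬ IsZero M ↔ Nontrivial M := by
  rw [ModuleCat.isZero_iff_subsingleton, not_subsingleton_iff_nontrivial]

lemma shortExact_kernel {P : ModuleCat.{0} A} (f : P ⟶ M) [Epi f] :
    (ShortComplex.mk (kernel.ι f) f (kernel.condition f)).ShortExact :=
  .mk (ShortComplex.exact_kernel f)

lemma projDimLE_iff : ProjDimLE A n M ↔ HasProjectiveDimensionLT M (n + 1) := by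
  induction n generalizing M with
  | zero =>
    rw [zero_add, ← projective_iff_hasProjectiveDimensionLT_one]
    exact ⟨fun | .zero _ h => h, .zero M⟩
  | succ n ih =>
    constructor
    · rintro (_ | ⟨_, _, P, f, hP, hf, h⟩)
      exact ((shortExact_kernel f).hasProjectiveDimensionLT_X₃_iff n hP).2 (ih.1 h)
    · intro h
      refine .succ n M _ (Projective.π M) inferInstance inferInstance (ih.2 ?_)
      exact ((shortExact_kernel (Projective.π M)).hasProjectiveDimensionLT_X₃_iff n
        inferInstance).1 h

lemma projDim_eq_iff [Nontrivial M] : projDim A M = n ↔ HasProjLength M (n + 1) := by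
  rw [HasProjLength.succ_iff (not_isZero_iff_nontrivial.2 ‹_›), projDim,
    sInf_natCast_eq_iff]
  · simp only [projDimLE_iff]
  · intro k m hkm hk
    rw [projDimLE_iff] at hk ⊢
    exact hasProjectiveDimensionLT_of_ge M (k + 1) (m + 1) (by omega)

lemma HasProjLength.projDim_add_one [Nontrivial M] (h : HasProjLength M n) :
    projDim A M + 1 = n := by
  cases n with
  | zero => exact absurd (HasProjLength.zero_iff.1 h) (not_isZero_iff_nontrivial.2 ‹_›)
  | succ n => rw [projDim_eq_iff.2 h, Nat.cast_succ]

lemma HasProjLength.projDim_le_projDim {N : ModuleCat.{0} A} [Nontrivial M] [Nontrivial N]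
    (hM : HasProjLength M m) (hN : HasProjLength N n) (hmn : m ≤ n) :
    projDim A M ≤ projDim A N := by
  rw [← ENat.add_le_add_iff_right ENat.one_ne_top, hM.projDim_add_one, hN.projDim_add_one]
  exact Nat.cast_le.2 hmn

lemma exists_odd_projDim_iff [Nontrivial M] :
    (∃ n : ℕ, projDim A M = n ∧ Odd n) ↔ ∃ k, HasProjLength M (2 * k) := by
  constructor
  · rintro ⟨_, hn, k, rfl⟩
    exact ⟨k + 1, projDim_eq_iff.1 hn⟩
  · rintro ⟨_ | k, hk⟩
    · exact absurd (HasProjLength.zero_iff.1 hk) (not_isZero_iff_nontrivial.2 ‹_›)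
    · exact ⟨2 * k + 1, projDim_eq_iff.2 hk, odd_two_mul_add_one k⟩

lemma IsProjectiveCoverHom.isIso {P : ModuleCat.{0} A} {f : P ⟶ M}
    (hf : IsProjectiveCoverHom A f) [Projective M] : IsIso f := by
  obtain ⟨_, _, hess⟩ := hf
  let s : M ⟶ P := Projective.factorThru (𝟙 M) f
  have hs : s ≫ f = 𝟙 M := Projective.factorThru_comp _ _
  have : Epi s := hess _ s (by rw [hs]; infer_instance)
  have : IsSplitMono s := ⟨⟨f, hs⟩⟩
  have : IsIso s := isIso_of_epi_of_isSplitMono s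
  exact IsIso.of_isIso_fac_left hs

lemma IsProjectiveCoverHom.projective_iff {P : ModuleCat.{0} A} {f : P ⟶ M}
    (hf : IsProjectiveCoverHom A f) : Projective M ↔ IsZero (kernel f) := by
  obtain ⟨_, _, -⟩ := id hf
  refine ⟨fun _ => ?_, fun h => ?_⟩
  · have := hf.isIso
    exact isZero_kernel_of_mono f
  · have : Mono f := Preadditive.mono_of_kernel_zero (h.eq_of_src _ _)
    have : IsIso f := isIso_of_mono_of_epi f
    exact Projective.of_iso (asIso f) ‹_›

lemma IsSyzygyOf.hasProjectiveDimensionLT_iff {X : ModuleCat.{0} A} (h : IsSyzygyOf A M X) :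
    HasProjectiveDimensionLT M (n + 1) ↔ HasProjectiveDimensionLT X n := by
  obtain ⟨P, f, hf, ⟨e⟩⟩ := h
  obtain ⟨hP, _, -⟩ := id hf
  suffices HasProjectiveDimensionLT M (n + 1) ↔ HasProjectiveDimensionLT (kernel f) n from
    this.trans ⟨fun _ => hasProjectiveDimensionLT_of_iso e.symm n,
      fun _ => hasProjectiveDimensionLT_of_iso e n⟩
  cases n with
  | zero =>
    rw [hasProjectiveDimensionLT_zero_iff_isZero, zero_add,
      ← projective_iff_hasProjectiveDimensionLT_one, hf.projective_iff]
  | succ n => exact (shortExact_kernel f).hasProjectiveDimensionLT_X₃_iff n hP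

lemma IsSyzygyOf.nontrivial {X : ModuleCat.{0} A} (h : IsSyzygyOf A M X)
    (hM : ¬ Projective M) : Nontrivial X := by
  rwa [← not_isZero_iff_nontrivial, ← hasProjectiveDimensionLT_zero_iff_isZero,
    ← h.hasProjectiveDimensionLT_iff, zero_add, ← projective_iff_hasProjectiveDimensionLT_one]

lemma IsSyzygyOf.hasProjLength_iff {X : ModuleCat.{0} A} (h : IsSyzygyOf A M X) [Nontrivial M] :
    HasProjLength M (n + 1) ↔ HasProjLength X n := by
  rw [HasProjLength.succ_iff (not_isZero_iff_nontrivial.2 ‹_›)]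
  exact forall_congr' fun m => by rw [h.hasProjectiveDimensionLT_iff]

end ProjDim

section Uniserial

variable {A : Type} [Ring A] {M N P : ModuleCat.{0} A}

namespace IsUniserial

lemma of_injective (hN : IsUniserial A N) (f : M →ₗ[A] N) (hf : Function.Injective f) :
    IsUniserial A M := fun N₁ N₂ => by
  simpa only [Submodule.map_le_map_iff_of_injective hf] using hN (N₁.map f) (N₂.map f)

lemma eq_top_or_eq_top_of_sup_eq_top (hM : IsUniserial A M) {N₁ N₂ : Submodule A M}
    (h : N₁ ⊔ N₂ = ⊤) : N₁ = ⊤ ∨ N₂ = ⊤ := by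
  rcases hM N₁ N₂ with h' | h'
  · exact .inr (by rwa [sup_eq_right.2 h'] at h)
  · exact .inl (by rwa [sup_eq_left.2 h'] at h)

lemma moduleFinite [IsArtinianRing A] (hM : IsUniserial A M) : Module.Finite A M := by
  have hle (x : M) : Module.length A (A ∙ x) ≤ Module.length A A := by
    rw [← LinearMap.range_toSpanSingleton]
    exact Module.length_le_of_surjective _ (LinearMap.surjective_rangeRestrict _)
  obtain ⟨x, hx⟩ := ENat.exists_eq_iSup_of_lt_top (f := fun x : M => Module.length A (A ∙ x))
    ((iSup_le hle).trans_lt (lt_top_iff_ne_top.2 Module.length_ne_top))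
  refine ⟨⟨{x}, ?_⟩⟩
  rw [Finset.coe_singleton, Submodule.eq_top_iff']
  intro y
  by_contra hy
  have hxy : A ∙ x ≤ A ∙ y :=
    (hM _ _).resolve_right fun h => hy (h (Submodule.mem_span_singleton_self y))
  have hlt : Module.length A (A ∙ x) < Module.length A (A ∙ y) := by
    rw [← (Submodule.comapSubtypeEquivOfLe hxy).length_eq]
    refine Submodule.length_lt fun h => hy ?_
    exact Submodule.comap_subtype_eq_top.1 h (Submodule.mem_span_singleton_self y)
  exact (hx ▸ le_iSup (fun x : M => Module.length A (A ∙ x)) y).not_gt hlt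

end IsUniserial

lemma exists_indec_projective_submodule [IsArtinian A P] [Module.Projective A P] [Nontrivial M]
    (hM : IsUniserial A M) (f : P →ₗ[A] M) (hf : Function.Surjective f) :
    ∃ N : Submodule A P, Module.Projective A N ∧ N.map f = ⊤ ∧ Indec A (.of A N) := by
  obtain ⟨N, ⟨hN, hfN⟩, hmin⟩ := wellFounded_lt.has_min
    {N : Submodule A P | Module.Projective A N ∧ N.map f = ⊤}
    ⟨⊤, .of_equiv Submodule.topEquiv.symm, by rwa [Submodule.map_top, LinearMap.range_eq_top]⟩
  have eq_bot_of_map_eq_top {N₁ N₂ : Submodule A N} (hc : IsCompl N₁ N₂)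
      (h : (N₁.map N.subtype).map f = ⊤) : N₂ = ⊥ := by
    have hN₁ : Module.Projective A N₁ :=
      .of_split N₁.subtype (N₁.projectionOnto N₂ hc) (by ext; simp)
    have hmap : N₁.map N.subtype = N := by
      refine (Submodule.map_subtype_le N N₁).eq_of_not_lt (hmin _ ⟨?_, h⟩)
      exact .of_equiv (N.equivSubtypeMap N₁)
    have : N₁ = ⊤ := Submodule.map_injective_of_injective N.subtype_injective (by simpa)
    exact eq_bot_of_top_isCompl (this ▸ hc)
  refine ⟨N, hN, hfN, ?_, fun N₁ N₂ hc => ?_⟩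
  · refine Submodule.nontrivial_iff_ne_bot.2 ?_
    rintro rfl
    exact bot_ne_top (Submodule.map_bot f ▸ hfN)
  · have hsup : (N₁.map N.subtype).map f ⊔ (N₂.map N.subtype).map f = ⊤ := by
      rw [← Submodule.map_sup, ← Submodule.map_sup, hc.sup_eq_top, Submodule.map_subtype_top, hfN]
    rcases hM.eq_top_or_eq_top_of_sup_eq_top hsup with h | h
    · exact .inr (eq_bot_of_map_eq_top hc h)
    · exact .inl (eq_bot_of_map_eq_top hc.symm h)

lemma IsUniserial.isProjectiveCoverHom [Projective P] [Nontrivial M] (hP : IsUniserial A P)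
    (f : P ⟶ M) [Epi f] : IsProjectiveCoverHom A f := by
  refine ⟨inferInstance, inferInstance, fun N g hgf => ?_⟩
  rw [ModuleCat.epi_iff_range_eq_top] at hgf ⊢
  have hsup : LinearMap.range g.hom ⊔ LinearMap.ker f.hom = ⊤ := by
    rw [← Submodule.comap_map_eq, ← LinearMap.range_comp, ← ModuleCat.hom_comp, hgf,
      Submodule.comap_top]
  refine (hP.eq_top_or_eq_top_of_sup_eq_top hsup).resolve_right fun hker => ?_
  have hf : LinearMap.range f.hom = ⊤ := (ModuleCat.epi_iff_range_eq_top f).1 inferInstance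
  rw [LinearMap.ker_eq_top.1 hker, LinearMap.range_zero] at hf
  exact bot_ne_top hf

/-- `A` is a left serial ring: its indecomposable finitely generated projective modules are
uniserial. -/
def IsLeftSerial (A : Type) [Ring A] : Prop :=
  ∀ P : ModuleCat.{0} A, Module.Finite A P → Projective P → Indec A P → IsUniserial A P

lemma IsLeftSerial.exists_isProjectiveCoverHom [IsArtinianRing A] (hA : IsLeftSerial A)
    [Nontrivial M] (hM : IsUniserial A M) :
    ∃ (P : ModuleCat.{0} A) (f : P ⟶ M), IsProjectiveCoverHom A f ∧ IsUniserial A P := by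
  have := hM.moduleFinite
  obtain ⟨n, f, hf⟩ := Module.Finite.exists_fin' A M
  obtain ⟨N, hN, hfN, hind⟩ :=
    exists_indec_projective_submodule (P := .of A (Fin n → A)) hM f hf
  have hproj : Projective (ModuleCat.of A N) := (IsProjective.iff_projective N).1 hN
  have huni := hA (.of A N) (inferInstanceAs (Module.Finite A N)) hproj hind
  have : Epi (ModuleCat.ofHom (f ∘ₗ N.subtype)) := by
    rw [ModuleCat.epi_iff_range_eq_top, ModuleCat.hom_ofHom, LinearMap.range_comp,
      Submodule.range_subtype, hfN]
  exact ⟨.of A N, ModuleCat.ofHom (f ∘ₗ N.subtype), huni.isProjectiveCoverHom _, huni⟩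

end Uniserial

section Rotation

variable {A : Type} [Ring A] [IsArtinianRing A] {S : ShortComplex (ModuleCat.{0} A)}

lemma exists_shortExact_syzygy (hA : IsLeftSerial A) (hS : S.ShortExact)
    (h₂ : IsUniserial A S.X₂) [Nontrivial S.X₃] :
    ∃ (K L : ModuleCat.{0} A) (i : K ⟶ L) (q : L ⟶ S.X₁) (w : i ≫ q = 0),
      (ShortComplex.mk i q w).ShortExact ∧ IsUniserial A L ∧
        IsSyzygyOf A S.X₂ K ∧ IsSyzygyOf A S.X₃ L := by
  have := hS.epi_g
  have : Nontrivial S.X₂ := hS.moduleCat_surjective_g.nontrivial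
  obtain ⟨P, p, hp, hP⟩ := hA.exists_isProjectiveCoverHom h₂
  obtain ⟨_, _, -⟩ := id hp
  obtain ⟨i, q, w, h⟩ := exists_shortExact_kernel_comp hS p
  exact ⟨_, _, i, q, w, h,
    hP.of_injective (kernel.ι (p ≫ S.g)).hom ((ModuleCat.mono_iff_injective _).1 inferInstance),
    ⟨P, p, hp, ⟨Iso.refl _⟩⟩, ⟨P, p ≫ S.g, hP.isProjectiveCoverHom _, ⟨Iso.refl _⟩⟩⟩

lemma exists_shortExact_secondSyzygy (hA : IsLeftSerial A) (hS : S.ShortExact)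
    (h₂ : IsUniserial A S.X₂) [Nontrivial S.X₁] [Nontrivial S.X₃] (hproj : ¬ Projective S.X₂) :
    ∃ T : ShortComplex (ModuleCat.{0} A), T.ShortExact ∧ IsUniserial A T.X₂ ∧
      (∀ n, HasProjLength S.X₁ (n + 2) ↔ HasProjLength T.X₁ n) ∧
      (∀ n, HasProjLength S.X₂ (n + 2) ↔ HasProjLength T.X₂ n) ∧
      (∀ n, HasProjLength S.X₃ (n + 2) ↔ HasProjLength T.X₃ n) := by
  obtain ⟨K₂, K₃, i, q, w, hT, hK₃, s₂, s₃⟩ := exists_shortExact_syzygy hA hS h₂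
  obtain ⟨L₃, K₁, i', q', w', hT', hK₁, t₃, s₁⟩ := exists_shortExact_syzygy hA hT hK₃
  have : Nontrivial S.X₂ := hS.moduleCat_surjective_g.nontrivial
  have : Nontrivial K₂ := s₂.nontrivial hproj
  have : Nontrivial K₃ := hT.moduleCat_surjective_g.nontrivial
  have : Nontrivial K₁ := hT'.moduleCat_surjective_g.nontrivial
  obtain ⟨L₁, L₂, i'', q'', w'', hT'', hL₂, t₁, t₂⟩ := exists_shortExact_syzygy hA hT' hK₁
  exact ⟨_, hT'', hL₂, fun _ => s₁.hasProjLength_iff.trans t₁.hasProjLength_iff,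
    fun _ => s₂.hasProjLength_iff.trans t₂.hasProjLength_iff,
    fun _ => s₃.hasProjLength_iff.trans t₃.hasProjLength_iff⟩

lemma exists_even_projLength_of_shortExact (hA : IsLeftSerial A) (hS : S.ShortExact)
    (h₂ : IsUniserial A S.X₂) {k : ℕ} (hk : HasProjLength S.X₂ (2 * k)) :
    (∃ a ≤ k, HasProjLength S.X₁ (2 * a)) ∧ ∃ b ≤ k, HasProjLength S.X₃ (2 * b) := by
  induction k generalizing S with
  | zero =>
    obtain ⟨hz₁, hz₃⟩ := isZero_X₁_and_isZero_X₃ hS (HasProjLength.zero_iff.1 hk)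
    exact ⟨⟨0, le_rfl, HasProjLength.zero_iff.2 hz₁⟩, ⟨0, le_rfl, HasProjLength.zero_iff.2 hz₃⟩⟩
  | succ k ih =>
    by_cases hz₁ : IsZero S.X₁
    · have := hS.isIso_g_iff.2 hz₁
      exact ⟨⟨0, by omega, HasProjLength.zero_iff.2 hz₁⟩, ⟨_, le_rfl, hk.of_iso (asIso S.g)⟩⟩
    by_cases hz₃ : IsZero S.X₃
    · have := hS.isIso_f_iff.2 hz₃
      exact ⟨⟨_, le_rfl, hk.of_iso (asIso S.f).symm⟩, ⟨0, by omega, HasProjLength.zero_iff.2 hz₃⟩⟩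
    rw [not_isZero_iff_nontrivial] at hz₁ hz₃
    have hproj : ¬ Projective S.X₂ := fun _ => by have := (hk 1).1 inferInstance; omega
    obtain ⟨T, hT, hT₂, iff₁, iff₂, iff₃⟩ := exists_shortExact_secondSyzygy hA hS h₂ hproj
    obtain ⟨⟨a, hak, ha⟩, ⟨b, hbk, hb⟩⟩ := ih hT hT₂ ((iff₂ _).1 hk)
    exact ⟨⟨a + 1, by omega, (iff₁ _).2 ha⟩, ⟨b + 1, by omega, (iff₃ _).2 hb⟩⟩

end Rotation

section CompositionFactors

variable {A : Type} [Ring A] {M S : ModuleCat.{0} A}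

lemma shortExact_subtype_mkQ (N : Submodule A M) :
    (ShortComplex.mk (ModuleCat.ofHom N.subtype) (ModuleCat.ofHom N.mkQ)
      (by ext; simp)).ShortExact :=
  ModuleCat.shortComplex_shortExact _ (LinearMap.exact_subtype_mkQ N) N.subtype_injective
    N.mkQ_surjective

lemma IsCompFactorOf.nontrivial (hS : IsCompFactorOf A S M) : Nontrivial S :=
  have := hS.1
  IsSimpleModule.nontrivial A S

lemma IsCompFactorOf.exists_even_projLength [IsArtinianRing A] (hA : IsLeftSerial A)
    (hM : IsUniserial A M) {k : ℕ} (hk : HasProjLength M (2 * k)) (hS : IsCompFactorOf A S M) :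
    ∃ a ≤ k, HasProjLength S (2 * a) := by
  obtain ⟨-, N', N, -, ⟨e⟩⟩ := hS
  obtain ⟨⟨a, hak, ha⟩, -⟩ :=
    exists_even_projLength_of_shortExact hA (shortExact_subtype_mkQ N) hM hk
  have hN : IsUniserial A (.of A N) := hM.of_injective N.subtype N.subtype_injective
  obtain ⟨-, ⟨b, hba, hb⟩⟩ :=
    exists_even_projLength_of_shortExact hA (shortExact_subtype_mkQ (M := .of A N) _) hN ha
  exact ⟨b, hba.trans hak, hb.of_iso e.toModuleIso⟩

lemma exists_isCompFactorOf_hasProjLength [IsArtinian A M] [IsNoetherian A M] [Nontrivial M]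
    (h : ∀ S, IsCompFactorOf A S M → ∃ k, HasProjLength S (2 * k)) :
    ∃ S, IsCompFactorOf A S M ∧ ∃ k, HasProjLength S (2 * k) ∧ HasProjLength M (2 * k) := by
  suffices key : ∀ N : Submodule A M, N ≠ ⊥ → ∃ S, IsCompFactorOf A S M ∧
      ∃ k, HasProjLength S (2 * k) ∧ HasProjLength (ModuleCat.of A N) (2 * k) by
    obtain ⟨S, hS, k, hSk, hk⟩ := key ⊤ top_ne_bot
    exact ⟨S, hS, k, hSk, hk.of_iso Submodule.topEquiv.toModuleIso⟩
  intro N hN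
  induction N using WellFoundedLT.induction with | ind N ih
  obtain ⟨N', -, hcov⟩ := exists_le_covBy_of_lt (bot_lt_iff_ne_bot.2 hN)
  let T : ModuleCat.{0} A := .of A (N ⧸ N'.comap N.subtype)
  have hT : IsCompFactorOf A T M :=
    ⟨(covBy_iff_quot_is_simple hcov.le).1 hcov, N', N, hcov.le, ⟨.refl _ _⟩⟩
  obtain ⟨b, hb⟩ := h T hT
  let e : ModuleCat.of A N' ≅ .of A (N'.comap N.subtype) :=
    (Submodule.comapSubtypeEquivOfLe hcov.le).symm.toModuleIso
  have hmax {a : ℕ} (ha : HasProjLength (ModuleCat.of A N') (2 * a)) :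
      HasProjLength (ModuleCat.of A N) (max (2 * a) (2 * b)) :=
    .max_of_shortExact (shortExact_subtype_mkQ (M := .of A N) _) (ha.of_iso e) hb (by omega)
  by_cases hN' : N' = ⊥
  · have hzero : HasProjLength (ModuleCat.of A N') (2 * 0) :=
      HasProjLength.zero_iff.2
        (ModuleCat.isZero_iff_subsingleton.2 (Submodule.subsingleton_iff_eq_bot.2 hN'))
    exact ⟨T, hT, b, hb, by simpa using hmax hzero⟩
  obtain ⟨S, hS, a, hSa, ha⟩ := ih N' hcov.lt hN'
  rcases le_total a b with hab | hab
  · exact ⟨T, hT, b, hb, by simpa [hab] using hmax ha⟩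
  · exact ⟨S, hS, a, hSa, by simpa [hab] using hmax ha⟩

end CompositionFactors

end ArtinAlg

open ArtinAlg in
theorem statement_7_general (A : Type) [Ring A] [IsArtinianRing A] (hA : IsLeftSerial A)
    (M : ModuleCat.{0} A) [Nontrivial M] (hM : IsUniserial A M) :
    ((∃ n : ℕ, projDim A M = n ∧ Odd n) ↔
      (∀ S : ModuleCat.{0} A, IsCompFactorOf A S M → ∃ n : ℕ, projDim A S = n ∧ Odd n)) ∧
    ((∃ n : ℕ, projDim A M = n ∧ Odd n) →
      projDim A M =
        sSup {x : ℕ∞ | ∃ S : ModuleCat.{0} A, IsCompFactorOf A S M ∧ x = projDim A S}) := by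
  have := hM.moduleFinite
  rw [exists_odd_projDim_iff]
  have exists_odd_iff : (∀ S, IsCompFactorOf A S M → ∃ n : ℕ, projDim A S = n ∧ Odd n) ↔
      ∀ S, IsCompFactorOf A S M → ∃ k, HasProjLength S (2 * k) :=
    forall₂_congr fun _ hS =>
      have := hS.nontrivial
      exists_odd_projDim_iff
  have even_of_even : (∃ k, HasProjLength M (2 * k)) →
      ∀ S, IsCompFactorOf A S M → ∃ k, HasProjLength S (2 * k) := fun ⟨_, hk⟩ _ hS =>
    (hS.exists_even_projLength hA hM hk).imp fun _ => And.right
  rw [exists_odd_iff]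
  refine ⟨⟨even_of_even, fun h => ?_⟩, fun h => le_antisymm ?_ (sSup_le ?_)⟩
  · obtain ⟨_, -, k, -, hk⟩ := exists_isCompFactorOf_hasProjLength h
    exact ⟨k, hk⟩
  · obtain ⟨S, hS, _, hSk, hMk⟩ := exists_isCompFactorOf_hasProjLength (even_of_even h)
    have := hS.nontrivial
    exact le_sSup_of_le ⟨S, hS, rfl⟩ (hMk.projDim_le_projDim hSk le_rfl)
  · rintro _ ⟨S, hS, rfl⟩
    have := hS.nontrivial
    obtain ⟨k, hMk⟩ := h
    obtain ⟨a, hak, hSa⟩ := hS.exists_even_projLength hA hM hMk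
    exact hSa.projDim_le_projDim hMk (Nat.mul_le_mul_left 2 hak)

open ArtinAlg in
/-- Let `A` be a Nakayama algebra and `M` an indecomposable module. Then
`pd M` is finite and odd iff every composition factor of `M` has finite odd projective
dimension; and in that case `pd M` is the maximum of `pd S` over the composition
factors `S` of `M`. -/
theorem statement_7 (R : Type) [CommRing R] [IsArtinianRing R]
    (A : Type) [Ring A] [Algebra R A] [Module.Finite R A]
    (hNak : IsNakayama A)
    (M : ModuleCat.{0} A) (hM : Module.Finite A ↥M) (hInd : Indec A M) :
    ((∃ n : ℕ, projDim A M = n ∧ Odd n) ↔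
      (∀ S : ModuleCat.{0} A, IsCompFactorOf A S M → ∃ n : ℕ, projDim A S = n ∧ Odd n)) ∧
    ((∃ n : ℕ, projDim A M = n ∧ Odd n) →
      projDim A M =
        sSup {x : ℕ∞ | ∃ S : ModuleCat.{0} A, IsCompFactorOf A S M ∧ x = projDim A S}) := by
  have := IsArtinianRing.of_finite R A
  have := hInd.1
  exact statement_7_general A (fun P hP _ h => hNak P hP h) M (hNak M hM hInd)
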